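/- Let t ≥ 1 be an integer and let c > 0, ε > 0 be constants. Let x₁, …, x_m ∈ ℝ^{1×d} be row vectors with ‖x_j‖₂ = 1 for all j, let α ∈ ℝ^m be a probability vector, and let a = (Σ_{j=1}^m α_j x_j) W_V W_O be nonzero. Let x' ∈ ℝ^{1×d} satisfy ‖x'‖₂ = 1 and a x'ᵀ ≥ (1 − δ)‖a‖₂ with 0 < δ ≤ (cε/(λ_Q λ_K λ_V λ_O))². Fix ℓ ∈ {1, …, m} and suppose x_ℓ W x_ℓᵀ ≥ c and x_ℓ W x_ℓᵀ ≥ ε^{-1} |x_j W x_ℓᵀ| for all j ≠ ℓ. Then (x_ℓ W x_ℓᵀ / ((t+1)‖a‖₂))·(α_ℓ − (1+√2)ε) ≤ (1/(t+1))·x' W_Q W_Kᵀ x_ℓᵀ ≤ (x_ℓ W x_ℓᵀ / ((t+1)‖a‖₂))·(α_ℓ + (1+√2)ε). -/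

import Mathlib

open Matrix BigOperators

/-- Euclidean norm of a row vector in ℝ^{1×d}. -/
noncomputable def rowNorm {d : ℕ} (x : Fin d → ℝ) : ℝ := Real.sqrt (∑ i, x i ^ 2)

/-- The ℓ²-operator norm (largest singular value) of a d×d real matrix. -/
noncomputable def opNorm2 {d : ℕ} (M : Matrix (Fin d) (Fin d) ℝ) : ℝ :=
  ‖(Matrix.toEuclideanLin M).toContinuousLinearMap‖

/-!
Two errors separate `‖a‖ x' W_Q W_Kᵀ x_ℓᵀ` from `α_ℓ x_ℓ W x_ℓᵀ`. Expanding `a W_Q W_Kᵀ x_ℓᵀ` as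
`∑ j, α_j x_j W x_ℓᵀ`, the terms `j ≠ ℓ` contribute at most `ε x_ℓ W x_ℓᵀ` in total. Replacing `a`
by `‖a‖ x'` moves it by at most `√(2δ) ‖a‖`, because `‖a‖ x'` and `a` are nearly aligned vectors of
the same length; as `‖a‖ ≤ λ_V λ_O`, the bound on `δ` makes this cost at most `√2 ε c`.
-/

open scoped RealInnerProductSpace

section Perturbation

variable {ι F : Type*} [Fintype ι] [NormedAddCommGroup F] [InnerProductSpace ℝ F]

lemma norm_norm_smul_sub_le_sqrt_mul {δ : ℝ} {a u : F} (hu : ‖u‖ ≤ 1)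
    (hau : (1 - δ) * ‖a‖ ≤ ⟪a, u⟫) : ‖‖a‖ • u - a‖ ≤ √(2 * δ) * ‖a‖ := by
  have hsq : ‖‖a‖ • u - a‖ ^ 2 ≤ 2 * δ * ‖a‖ ^ 2 := calc
    ‖‖a‖ • u - a‖ ^ 2 = ‖a‖ ^ 2 * ‖u‖ ^ 2 - 2 * (‖a‖ * ⟪a, u⟫) + ‖a‖ ^ 2 := by
      rw [norm_sub_sq_real, norm_smul, norm_norm, mul_pow, real_inner_smul_left, real_inner_comm]
    _ ≤ ‖a‖ ^ 2 * 1 ^ 2 - 2 * (‖a‖ * ((1 - δ) * ‖a‖)) + ‖a‖ ^ 2 := by gcongr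
    _ = 2 * δ * ‖a‖ ^ 2 := by ring
  calc ‖‖a‖ • u - a‖ ≤ √(2 * δ * ‖a‖ ^ 2) := Real.le_sqrt_of_sq_le hsq
    _ = √(2 * δ) * ‖a‖ := by rw [Real.sqrt_mul' _ (sq_nonneg _), Real.sqrt_sq (norm_nonneg a)]

lemma abs_sum_mul_sub_mul_le_of_mem_stdSimplex {α b : ι → ℝ} (hα : α ∈ stdSimplex ℝ ι) {η : ℝ}
    {ℓ : ι} (hb : ∀ j, j ≠ ℓ → |b j| ≤ η) :
    |∑ j, α j * b j - α ℓ * b ℓ| ≤ (1 - α ℓ) * η := by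
  classical
  have hrest : ∑ j ∈ Finset.univ.erase ℓ, α j = 1 - α ℓ := by
    rw [Finset.sum_erase_eq_sub (Finset.mem_univ ℓ), hα.2]
  rw [← Finset.sum_erase_eq_sub (Finset.mem_univ ℓ), ← hrest, Finset.sum_mul]
  refine (Finset.abs_sum_le_sum_abs _ _).trans (Finset.sum_le_sum fun j hj ↦ ?_)
  rw [abs_mul, abs_of_nonneg (hα.1 j)]
  exact mul_le_mul_of_nonneg_left (hb j (Finset.ne_of_mem_erase hj)) (hα.1 j)

lemma abs_norm_mul_apply_sub_mul_apply_le (φ : F →L[ℝ] ℝ) {α : ι → ℝ} (hα : α ∈ stdSimplex ℝ ι)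
    (v : ι → F) {a u : F} (ha : a = ∑ j, α j • v j) (hu : ‖u‖ ≤ 1) {δ η : ℝ}
    (hau : (1 - δ) * ‖a‖ ≤ ⟪a, u⟫) {ℓ : ι} (hη : ∀ j, j ≠ ℓ → |φ (v j)| ≤ η) :
    |‖a‖ * φ u - α ℓ * φ (v ℓ)| ≤ ‖φ‖ * (√(2 * δ) * ‖a‖) + (1 - α ℓ) * η := by
  have hdirection : |‖a‖ * φ u - φ a| ≤ ‖φ‖ * (√(2 * δ) * ‖a‖) := by
    rw [← smul_eq_mul, ← map_smul, ← map_sub]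
    exact φ.le_opNorm_of_le (norm_norm_smul_sub_le_sqrt_mul hu hau)
  have hmixture : |φ a - α ℓ * φ (v ℓ)| ≤ (1 - α ℓ) * η := by
    simpa [ha] using abs_sum_mul_sub_mul_le_of_mem_stdSimplex hα hη
  exact (abs_sub_le _ (φ a) _).trans (add_le_add hdirection hmixture)

end Perturbation

section Attention

variable {ι E F G H : Type*} [Fintype ι] [NormedAddCommGroup E] [NormedSpace ℝ E]
  [NormedAddCommGroup F] [InnerProductSpace ℝ F] [NormedAddCommGroup G] [InnerProductSpace ℝ G]
  [NormedAddCommGroup H] [NormedSpace ℝ H]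

lemma norm_innerSL_comp_le (Q : F →L[ℝ] G) (K : E →L[ℝ] G) {y : E} (hy : ‖y‖ ≤ 1) :
    ‖innerSL ℝ (K y) ∘L Q‖ ≤ ‖Q‖ * ‖K‖ := calc
  ‖innerSL ℝ (K y) ∘L Q‖ ≤ ‖innerSL ℝ (K y)‖ * ‖Q‖ := ContinuousLinearMap.opNorm_comp_le _ _
  _ ≤ ‖K‖ * ‖Q‖ := by rw [innerSL_apply_norm]; gcongr; exact K.unit_le_opNorm y hy
  _ = ‖Q‖ * ‖K‖ := mul_comm _ _

lemma norm_apply_apply_sum_smul_le (V : E →L[ℝ] H) (O : H →L[ℝ] F) {α : ι → ℝ}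
    (hα : α ∈ stdSimplex ℝ ι) {x : ι → E} (hx : ∀ j, ‖x j‖ ≤ 1) :
    ‖O (V (∑ j, α j • x j))‖ ≤ ‖V‖ * ‖O‖ := by
  have hmem : ∑ j, α j • x j ∈ Metric.closedBall (0 : E) 1 :=
    (convex_closedBall 0 1).sum_mem (fun j _ ↦ hα.1 j) hα.2 fun j _ ↦
      mem_closedBall_zero_iff.2 (hx j)
  rw [mul_comm]
  exact O.le_opNorm_of_le (V.unit_le_opNorm _ (mem_closedBall_zero_iff.1 hmem))

lemma mul_sqrt_two_mul_le {L s δ : ℝ} (hL : 0 ≤ L) (hs : 0 ≤ s) (hδ : δ ≤ (s / L) ^ 2) :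
    L * √(2 * δ) ≤ √2 * s := calc
  L * √(2 * δ) ≤ L * (√2 * (s / L)) := by
    rw [Real.sqrt_mul zero_le_two]
    gcongr
    exact (Real.sqrt_le_left (by positivity)).2 hδ
  _ = √2 * (s * (L / L)) := by ring
  _ ≤ √2 * s := by gcongr; exact mul_le_of_le_one_right hs (div_self_le_one L)

lemma abs_norm_mul_inner_sub_mul_inner_le {c ε δ : ℝ} (hc : 0 < c) (hε : 0 < ε)
    (Q : F →L[ℝ] G) (K : E →L[ℝ] G) (V : E →L[ℝ] H) (O : H →L[ℝ] F)
    {x : ι → E} (hx : ∀ j, ‖x j‖ ≤ 1) {α : ι → ℝ} (hα : α ∈ stdSimplex ℝ ι)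
    {a u : F} (ha : a = O (V (∑ j, α j • x j))) (hu : ‖u‖ ≤ 1)
    (hau : (1 - δ) * ‖a‖ ≤ ⟪a, u⟫) (hδ : δ ≤ (c * ε / (‖Q‖ * ‖K‖ * ‖V‖ * ‖O‖)) ^ 2)
    {ℓ : ι} (hdiag : c ≤ ⟪Q (O (V (x ℓ))), K (x ℓ)⟫)
    (hdom : ∀ j, j ≠ ℓ →
      ε⁻¹ * |⟪Q (O (V (x j))), K (x ℓ)⟫| ≤ ⟪Q (O (V (x ℓ))), K (x ℓ)⟫) :
    |‖a‖ * ⟪Q u, K (x ℓ)⟫ - α ℓ * ⟪Q (O (V (x ℓ))), K (x ℓ)⟫| ≤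
      (1 + √2) * ε * ⟪Q (O (V (x ℓ))), K (x ℓ)⟫ := by
  set D := ⟪Q (O (V (x ℓ))), K (x ℓ)⟫
  let φ : F →L[ℝ] ℝ := innerSL ℝ (K (x ℓ)) ∘L Q
  have hφ (y : F) : φ y = ⟪Q y, K (x ℓ)⟫ := real_inner_comm _ _
  have hmixture : |‖a‖ * φ u - α ℓ * φ (O (V (x ℓ)))| ≤
      ‖φ‖ * (√(2 * δ) * ‖a‖) + (1 - α ℓ) * (ε * D) :=
    abs_norm_mul_apply_sub_mul_apply_le φ hα (fun j ↦ O (V (x j))) (by simp [ha]) hu hau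
      fun j hj ↦ by rw [hφ]; exact (inv_mul_le_iff₀ hε).1 (hdom j hj)
  have hdirection : ‖φ‖ * (√(2 * δ) * ‖a‖) ≤ √2 * (c * ε) := calc
    ‖φ‖ * (√(2 * δ) * ‖a‖) ≤ (‖Q‖ * ‖K‖) * (√(2 * δ) * (‖V‖ * ‖O‖)) := by
      gcongr
      · exact norm_innerSL_comp_le Q K (hx ℓ)
      · exact ha ▸ norm_apply_apply_sum_smul_le V O hα hx
    _ = ‖Q‖ * ‖K‖ * ‖V‖ * ‖O‖ * √(2 * δ) := by ring
    _ ≤ √2 * (c * ε) := mul_sqrt_two_mul_le (by positivity) (by positivity) hδ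
  have hD : 0 < D := hc.trans_le hdiag
  rw [hφ, hφ] at hmixture
  calc |‖a‖ * ⟪Q u, K (x ℓ)⟫ - α ℓ * D|
      ≤ √2 * (c * ε) + (1 - α ℓ) * (ε * D) := hmixture.trans (by gcongr)
    _ ≤ √2 * (D * ε) + (1 - 0) * (ε * D) := by gcongr; exact hα.1 ℓ
    _ = (1 + √2) * ε * D := by ring

theorem stmt5_general (t : ℝ) (ht : -1 < t) (c ε δ : ℝ) (hc : 0 < c) (hε : 0 < ε)
    (Q : F →L[ℝ] G) (K : E →L[ℝ] G) (V : E →L[ℝ] H) (O : H →L[ℝ] F)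
    (x : ι → E) (hx : ∀ j, ‖x j‖ ≤ 1) (α : ι → ℝ) (hα : α ∈ stdSimplex ℝ ι)
    (a : F) (ha : a = O (V (∑ j, α j • x j))) (ha0 : a ≠ 0)
    (u : F) (hu : ‖u‖ ≤ 1) (hau : (1 - δ) * ‖a‖ ≤ ⟪a, u⟫)
    (hδ : δ ≤ (c * ε / (‖Q‖ * ‖K‖ * ‖V‖ * ‖O‖)) ^ 2)
    (ℓ : ι) (hdiag : c ≤ ⟪Q (O (V (x ℓ))), K (x ℓ)⟫)
    (hdom : ∀ j, j ≠ ℓ →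
      ε⁻¹ * |⟪Q (O (V (x j))), K (x ℓ)⟫| ≤ ⟪Q (O (V (x ℓ))), K (x ℓ)⟫) :
    ⟪Q (O (V (x ℓ))), K (x ℓ)⟫ / ((t + 1) * ‖a‖) * (α ℓ - (1 + √2) * ε) ≤
        1 / (t + 1) * ⟪Q u, K (x ℓ)⟫ ∧
      1 / (t + 1) * ⟪Q u, K (x ℓ)⟫ ≤
        ⟪Q (O (V (x ℓ))), K (x ℓ)⟫ / ((t + 1) * ‖a‖) * (α ℓ + (1 + √2) * ε) := by
  set D := ⟪Q (O (V (x ℓ))), K (x ℓ)⟫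
  have ha_pos : 0 < ‖a‖ := norm_pos_iff.2 ha0
  have ht_pos : 0 < t + 1 := neg_lt_iff_pos_add.1 ht
  have hscale (z : ℝ) : D / ((t + 1) * ‖a‖) * z = 1 / (t + 1) * (D * z / ‖a‖) := by field_simp
  obtain ⟨hlower, hupper⟩ := abs_le.1
    (abs_norm_mul_inner_sub_mul_inner_le hc hε Q K V O hx hα ha hu hau hδ hdiag hdom)
  rw [hscale, hscale]
  constructor <;> gcongr
  · rw [div_le_iff₀ ha_pos]
    linarith
  · rw [le_div_iff₀ ha_pos]
    linarith

end Attention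

section RowVector

variable {n : Type*} [Fintype n] {d : ℕ}

lemma rowNorm_eq_norm_toLp (y : Fin d → ℝ) : rowNorm y = ‖WithLp.toLp 2 y‖ := by
  simp [rowNorm, EuclideanSpace.norm_eq]

lemma dotProduct_eq_inner_toLp (y z : n → ℝ) :
    y ⬝ᵥ z = ⟪WithLp.toLp 2 y, WithLp.toLp 2 z⟫ := by
  rw [EuclideanSpace.inner_toLp_toLp, star_trivial, dotProduct_comm]

variable [DecidableEq n]

/-- Right multiplication `y ↦ y M` of row vectors by a square matrix, as a continuous linear map of
Euclidean space; it turns statements about row vectors into statements about operators. Since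
`toEuclideanCLM` multiplies column vectors from the left, it is applied to the transpose. -/
noncomputable def vecMulCLM (M : Matrix n n ℝ) : EuclideanSpace ℝ n →L[ℝ] EuclideanSpace ℝ n :=
  toEuclideanCLM (𝕜 := ℝ) Mᵀ

lemma vecMulCLM_toLp (M : Matrix n n ℝ) (y : n → ℝ) :
    vecMulCLM M (WithLp.toLp 2 y) = WithLp.toLp 2 (y ᵥ* M) := by
  rw [vecMulCLM, toEuclideanCLM_toLp, mulVec_transpose]

lemma norm_vecMulCLM (M : Matrix (Fin d) (Fin d) ℝ) : ‖vecMulCLM M‖ = opNorm2 M := by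
  rw [vecMulCLM, ← conjTranspose_eq_transpose_of_trivial, ← star_eq_conjTranspose, map_star,
    ContinuousLinearMap.star_eq_adjoint, LinearIsometryEquiv.norm_map]
  rfl

lemma vecMul_mul_transpose_dotProduct (A B : Matrix n n ℝ) (y z : n → ℝ) :
    (y ᵥ* (A * Bᵀ)) ⬝ᵥ z =
      ⟪vecMulCLM A (WithLp.toLp 2 y), vecMulCLM B (WithLp.toLp 2 z)⟫ := by
  rw [vecMulCLM_toLp, vecMulCLM_toLp, ← dotProduct_eq_inner_toLp, ← vecMul_vecMul,
    ← dotProduct_mulVec, mulVec_transpose]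

lemma vecMulCLM_mul (A B : Matrix n n ℝ) (y : EuclideanSpace ℝ n) :
    vecMulCLM (A * B) y = vecMulCLM B (vecMulCLM A y) := by
  rw [vecMulCLM, transpose_mul, map_mul]
  rfl

end RowVector

/-- Let t ≥ 1 be an integer and let c > 0, ε > 0 be constants. Let x₁, …, x_m be unit
row vectors, α a probability vector, and a = (Σ_j α_j x_j) W_V W_O nonzero. Let x'
satisfy ‖x'‖₂ = 1 and a x'ᵀ ≥ (1 − δ)‖a‖₂ with 0 < δ ≤ (cε/(λ_Q λ_K λ_V λ_O))².
Fix ℓ and suppose x_ℓ W x_ℓᵀ ≥ c and x_ℓ W x_ℓᵀ ≥ ε^{-1} |x_j W x_ℓᵀ| for all j ≠ ℓ.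
Then (x_ℓ W x_ℓᵀ / ((t+1)‖a‖₂))·(α_ℓ − (1+√2)ε) ≤ (1/(t+1))·x' W_Q W_Kᵀ x_ℓᵀ
  ≤ (x_ℓ W x_ℓᵀ / ((t+1)‖a‖₂))·(α_ℓ + (1+√2)ε). -/
theorem stmt5 {d m : ℕ} (t : ℕ) (ht : 1 ≤ t)
    (c ε δ : ℝ) (hc : 0 < c) (hε : 0 < ε)
    (WQ WK WV WO : Matrix (Fin d) (Fin d) ℝ)
    (hsvQ : 0 < opNorm2 WQ) (hsvK : 0 < opNorm2 WK)
    (hsvV : 0 < opNorm2 WV) (hsvO : 0 < opNorm2 WO)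
    (W : Matrix (Fin d) (Fin d) ℝ) (hW : W = WV * WO * WQ * WKᵀ)
    (x : Fin m → (Fin d → ℝ)) (hx : ∀ j, rowNorm (x j) = 1)
    (α : Fin m → ℝ) (hα0 : ∀ j, 0 ≤ α j) (hα1 : ∑ j, α j = 1)
    (a : Fin d → ℝ) (ha : a = (∑ j, α j • x j) ᵥ* (WV * WO)) (ha0 : a ≠ 0)
    (x' : Fin d → ℝ) (hx' : rowNorm x' = 1)
    (hax' : a ⬝ᵥ x' ≥ (1 - δ) * rowNorm a)
    (hδ0 : 0 < δ)
    (hδ : δ ≤ (c * ε / (opNorm2 WQ * opNorm2 WK * opNorm2 WV * opNorm2 WO)) ^ 2)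
    (ℓ : Fin m)
    (hdiag : (x ℓ ᵥ* W) ⬝ᵥ x ℓ ≥ c)
    (hdom : ∀ j, j ≠ ℓ → (x ℓ ᵥ* W) ⬝ᵥ x ℓ ≥ ε⁻¹ * |(x j ᵥ* W) ⬝ᵥ x ℓ|) :
    ((x ℓ ᵥ* W) ⬝ᵥ x ℓ / (((t : ℝ) + 1) * rowNorm a)) * (α ℓ - (1 + Real.sqrt 2) * ε) ≤
        (1 / ((t : ℝ) + 1)) * ((x' ᵥ* (WQ * WKᵀ)) ⬝ᵥ x ℓ) ∧
      (1 / ((t : ℝ) + 1)) * ((x' ᵥ* (WQ * WKᵀ)) ⬝ᵥ x ℓ) ≤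
        ((x ℓ ᵥ* W) ⬝ᵥ x ℓ / (((t : ℝ) + 1) * rowNorm a)) * (α ℓ + (1 + Real.sqrt 2) * ε) := by
  subst hW
  simp only [rowNorm_eq_norm_toLp, vecMul_mul_transpose_dotProduct, vecMulCLM_mul,
    ← norm_vecMulCLM, dotProduct_eq_inner_toLp a x'] at hx hx' hax' hδ hdiag hdom ⊢
  exact stmt5_general t (by linarith [t.cast_nonneg (α := ℝ)]) c ε δ hc hε _ _ _ _ _
    (fun j ↦ (hx j).le) α ⟨hα0, hα1⟩ _ (by simp [ha, vecMulCLM_toLp, sum_vecMul, smul_vecMul])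
    (by simpa using ha0) _ hx'.le hax' hδ ℓ hdiag hdom
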